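/- Let 0 < q < 1, 0 < 2α < n, and let σ be a radially symmetric nonnegative locally finite Borel measure on ℝⁿ. Suppose there exists c > 0 such that Kσ(x) ≤ c (I_{2α}σ(x))^{1/(1-q)} for all sufficiently small |x| ≠ 0, where Kσ(x) = |x|^{-(n-2α)} (∫_{|y|<|x|} |y|^{-(n-2α)q} dσ(y))^{1/(1-q)}. Then limsup_{|x|→0} [ |x|^{-(n-2α)(1-q)} ∫_{B(0,|x|)} |y|^{-(n-2α)q} dσ(y) ] / [ ∫_{|y|≥|x|} |y|^{-(n-2α)} dσ(y) ] < ∞. -/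

import Mathlib

open MeasureTheory Metric Set Filter

/-- The Riesz potential `I_{2α}σ(x) = ∫_0^∞ σ(B(x,r))/r^{n-2α} dr/r`. -/
noncomputable def riesz2 {n : ℕ} (α : ℝ)
    (σ : Measure (EuclideanSpace ℝ (Fin n)))
    (x : EuclideanSpace ℝ (Fin n)) : ENNReal :=
  ∫⁻ r in Ioi (0:ℝ),
    σ (ball x r) / ENNReal.ofReal (r ^ ((n : ℝ) - 2 * α)) / ENNReal.ofReal r

/-- `Kσ(x) = |x|^{-(n-2α)} (∫_{|y|<|x|} |y|^{-(n-2α)q} dσ(y))^{1/(1-q)}`. -/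
noncomputable def Kpot {n : ℕ} (α q : ℝ)
    (σ : Measure (EuclideanSpace ℝ (Fin n)))
    (x : EuclideanSpace ℝ (Fin n)) : ENNReal :=
  (∫⁻ y in ball (0 : EuclideanSpace ℝ (Fin n)) ‖x‖,
      (ENNReal.ofReal (‖y‖ ^ (((n : ℝ) - 2 * α) * q)))⁻¹ ∂σ) ^ (1 / (1 - q)) /
    ENNReal.ofReal (‖x‖ ^ ((n : ℝ) - 2 * α))

/-- The ratio `[r^{-(n-2α)(1-q)} ∫_{B(0,r)} |y|^{-(n-2α)q} dσ] / [∫_{|y|≥r} |y|^{-(n-2α)} dσ]`. -/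
noncomputable def ratioFn {n : ℕ} (α q : ℝ)
    (σ : Measure (EuclideanSpace ℝ (Fin n))) (r : ℝ) : ENNReal :=
  (∫⁻ y in ball (0 : EuclideanSpace ℝ (Fin n)) r,
      (ENNReal.ofReal (‖y‖ ^ (((n : ℝ) - 2 * α) * q)))⁻¹ ∂σ) /
    ENNReal.ofReal (r ^ (((n : ℝ) - 2 * α) * (1 - q))) /
    (∫⁻ y in {y : EuclideanSpace ℝ (Fin n) | r ≤ ‖y‖},
      (ENNReal.ofReal (‖y‖ ^ ((n : ℝ) - 2 * α)))⁻¹ ∂σ)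


lemma aux_Ioi (s a : ℝ) (hs : 0 < s) (ha : 0 < a) :
    ∫⁻ t in Ioi a, ENNReal.ofReal (t ^ (-s - 1)) = ENNReal.ofReal (a ^ (-s) / s) := by
  rw [← ofReal_integral_eq_lintegral_ofReal]
  · rw [integral_Ioi_rpow_of_lt (by linarith) ha]
    congr 1
    rw [show -s - 1 + 1 = -s by ring, neg_div_neg_eq]
  · exact integrableOn_Ioi_rpow_of_lt (by linarith) ha
  · filter_upwards [ae_restrict_mem measurableSet_Ioi] with t ht
    exact Real.rpow_nonneg (ha.trans ht).le _

lemma aux_Ioc (p a : ℝ) (hp : 0 < p) (ha : 0 < a) :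
    ∫⁻ t in Ioc 0 a, ENNReal.ofReal (t ^ (p - 1)) = ENNReal.ofReal (a ^ p / p) := by
  rw [← ofReal_integral_eq_lintegral_ofReal]
  · rw [← intervalIntegral.integral_of_le ha.le, integral_rpow (Or.inl (by linarith))]
    congr 1
    rw [show p - 1 + 1 = p by ring, Real.zero_rpow hp.ne', sub_zero]
  · exact (intervalIntegrable_iff_integrableOn_Ioc_of_le ha.le).1
      (intervalIntegral.intervalIntegrable_rpow' (by linarith))
  · filter_upwards [ae_restrict_mem measurableSet_Ioc] with t ht
    exact Real.rpow_nonneg ht.1.le _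

lemma aux_swap {n : ℕ} (α : ℝ) (σ : Measure (EuclideanSpace ℝ (Fin n)))
    [IsLocallyFiniteMeasure σ] (A : Set (EuclideanSpace ℝ (Fin n))) :
    ∫⁻ x in A, riesz2 α σ x = ∫⁻ y, (∫⁻ t in Ioi (0:ℝ),
      ENNReal.ofReal (t ^ (-((n : ℝ) - 2 * α) - 1)) * volume (A ∩ ball y t)) ∂σ := by
  set s := (n : ℝ) - 2 * α with hs
  set k : ℝ → ENNReal := fun t => ENNReal.ofReal (t ^ (-s - 1)) with hk
  have hkm : Measurable k := by fun_prop
  have hS : MeasurableSet {p : (EuclideanSpace ℝ (Fin n) × ℝ) × EuclideanSpace ℝ (Fin n) |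
      dist p.1.1 p.2 < p.1.2} := by
    apply measurableSet_lt <;> fun_prop
  set F : (EuclideanSpace ℝ (Fin n) × ℝ) × EuclideanSpace ℝ (Fin n) → ENNReal :=
    Set.indicator {p | dist p.1.1 p.2 < p.1.2} (fun p => k p.1.2) with hF
  have hFm : Measurable F := (by fun_prop : Measurable fun p :
    (EuclideanSpace ℝ (Fin n) × ℝ) × EuclideanSpace ℝ (Fin n) => k p.1.2).indicator hS
  have h1 : ∀ x, riesz2 α σ x = ∫⁻ t in Ioi (0:ℝ), ∫⁻ y, F ((x, t), y) ∂σ := by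
    intro x
    unfold riesz2
    rw [← hs]
    refine setLIntegral_congr_fun measurableSet_Ioi fun t ht => ?_
    have ht : 0 < t := ht
    have : ∀ y, F ((x, t), y) = (ball x t).indicator (fun _ => k t) y := by
      intro y
      simp only [hF, Set.indicator, mem_ofPred_eq, mem_ball, dist_comm]
    simp_rw [this]
    rw [lintegral_indicator_const measurableSet_ball, hk]
    dsimp only
    rw [Real.rpow_sub ht (-s) 1, Real.rpow_neg ht.le, Real.rpow_one, div_eq_mul_inv (t ^ s)⁻¹ t,
      ENNReal.ofReal_mul (by positivity), ENNReal.ofReal_inv_of_pos ht,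
      ENNReal.ofReal_inv_of_pos (by positivity), div_eq_mul_inv, div_eq_mul_inv]
    ring
  simp_rw [h1]
  have h2 : ∀ x, ∫⁻ t in Ioi (0:ℝ), ∫⁻ y, F ((x, t), y) ∂σ
      = ∫⁻ y, (∫⁻ t in Ioi (0:ℝ), F ((x, t), y)) ∂σ := by
    intro x
    rw [lintegral_lintegral_swap]
    exact (hFm.comp (by fun_prop : Measurable fun p : ℝ × EuclideanSpace ℝ (Fin n) =>
      ((x, p.1), p.2))).aemeasurable
  simp_rw [h2]
  rw [lintegral_lintegral_swap]
  · congr 1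
    ext y
    rw [lintegral_lintegral_swap]
    · congr 1
      ext t
      have : ∀ x, F ((x, t), y) = (ball y t).indicator (fun _ => k t) x := by
        intro x
        simp only [hF, Set.indicator, mem_ofPred_eq, mem_ball]
      simp_rw [this]
      rw [lintegral_indicator_const measurableSet_ball, Measure.restrict_apply measurableSet_ball,
        inter_comm]
    · exact (hFm.comp (by fun_prop : Measurable fun p : EuclideanSpace ℝ (Fin n) × ℝ =>
        ((p.1, p.2), y))).aemeasurable
  · refine Measurable.aemeasurable ?_
    refine Measurable.lintegral_prod_right' (f := fun z : (EuclideanSpace ℝ (Fin n) × EuclideanSpace ℝ (Fin n)) × ℝ => F ((z.1.1, z.2), z.1.2)) ?_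
    exact hFm.comp (by fun_prop)

lemma aux_G1 {n : ℕ} (s ρ : ℝ) (hs : 0 < s) (hsn : s < n) (hρ : 0 < ρ)
    (x₀ y : EuclideanSpace ℝ (Fin n)) :
    ∫⁻ t in Ioi (0:ℝ), ENNReal.ofReal (t ^ (-s - 1)) * volume (ball x₀ ρ ∩ ball y t)
      ≤ volume (ball x₀ ρ) * ENNReal.ofReal ((1 / (n - s) + 1 / s) * ρ ^ (-s)) := by
  set ω := volume (ball (0 : EuclideanSpace ℝ (Fin n)) 1) with hω
  have hball : ∀ (z : EuclideanSpace ℝ (Fin n)) (t : ℝ), 0 < t →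
      volume (ball z t) = ENNReal.ofReal (t ^ (n : ℝ)) * ω := by
    intro z t ht
    rw [Measure.addHaar_ball_of_pos _ _ ht]
    simp [hω]
  have hns : 0 < (n : ℝ) - s := by linarith
  rw [← Ioc_union_Ioi_eq_Ioi hρ.le]
  refine (lintegral_union_le _ _ _).trans ?_
  have h1 : ∫⁻ t in Ioc 0 ρ, ENNReal.ofReal (t ^ (-s - 1)) * volume (ball x₀ ρ ∩ ball y t)
      ≤ ENNReal.ofReal (ρ ^ (n - s) / (n - s)) * ω := by
    rw [← aux_Ioc _ _ hns hρ, ← lintegral_mul_const _ (by fun_prop)]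
    refine setLIntegral_mono' measurableSet_Ioc fun t ht => ?_
    calc _ ≤ ENNReal.ofReal (t ^ (-s - 1)) * volume (ball y t) := by
          gcongr; exact inter_subset_right
      _ = _ := by
          rw [hball y t ht.1, ← mul_assoc, ← ENNReal.ofReal_mul (Real.rpow_nonneg ht.1.le _),
            ← Real.rpow_add ht.1]
          ring_nf
  have h2 : ∫⁻ t in Ioi ρ, ENNReal.ofReal (t ^ (-s - 1)) * volume (ball x₀ ρ ∩ ball y t)
      ≤ ENNReal.ofReal (ρ ^ (-s) / s) * volume (ball x₀ ρ) := by
    rw [← aux_Ioi _ _ hs hρ, ← lintegral_mul_const _ (by fun_prop)]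
    refine lintegral_mono fun t => ?_
    dsimp only
    gcongr; exact inter_subset_left
  refine (add_le_add h1 h2).trans (le_of_eq ?_)
  rw [hball x₀ ρ hρ, add_mul, ENNReal.ofReal_add (by positivity) (by positivity), mul_add,
    mul_comm (ENNReal.ofReal (ρ ^ (n:ℝ))) ω, mul_assoc ω, ← ENNReal.ofReal_mul (by positivity),
    sub_eq_add_neg, Real.rpow_add hρ]
  rw [mul_comm _ ω, mul_comm (ENNReal.ofReal (ρ ^ (-s) / s)), mul_assoc ω,
    ← ENNReal.ofReal_mul (by positivity), mul_assoc ω, ← ENNReal.ofReal_mul (by positivity)]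
  ring_nf

lemma aux_G2 {n : ℕ} (s ρ : ℝ) (hs : 0 < s) (hρ : 0 < ρ)
    (x₀ y : EuclideanSpace ℝ (Fin n)) (hx₀ : ‖x₀‖ = 2 * ρ) (hy : 6 * ρ ≤ ‖y‖) :
    ∫⁻ t in Ioi (0:ℝ), ENNReal.ofReal (t ^ (-s - 1)) * volume (ball x₀ ρ ∩ ball y t)
      ≤ volume (ball x₀ ρ) * ENNReal.ofReal (2 ^ s / s) * (ENNReal.ofReal (‖y‖ ^ s))⁻¹ := by
  have hy0 : 0 < ‖y‖ := by linarith
  have h0 : ∀ t ∈ Ioc 0 (‖y‖ / 2),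
      ENNReal.ofReal (t ^ (-s - 1)) * volume (ball x₀ ρ ∩ ball y t) = 0 := by
    intro t ht
    have : ball x₀ ρ ∩ ball y t = ∅ := by
      apply Disjoint.inter_eq
      apply ball_disjoint_ball
      have h1 := norm_sub_norm_le y x₀
      rw [dist_comm, dist_eq_norm]
      linarith [ht.2]
    simp [this]
  rw [← Ioc_union_Ioi_eq_Ioi (by positivity : 0 ≤ ‖y‖ / 2)]
  refine (lintegral_union_le _ _ _).trans ?_
  rw [setLIntegral_congr_fun measurableSet_Ioc h0, lintegral_zero, zero_add]
  calc _ ≤ ∫⁻ t in Ioi (‖y‖ / 2), ENNReal.ofReal (t ^ (-s - 1)) * volume (ball x₀ ρ) := by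
        refine lintegral_mono fun t => ?_
        dsimp only
        gcongr; exact inter_subset_left
    _ = _ := by
        rw [lintegral_mul_const _ (by fun_prop), aux_Ioi _ _ hs (by positivity), mul_assoc,
          mul_comm]
        congr 1
        rw [← ENNReal.ofReal_inv_of_pos (by positivity), ← ENNReal.ofReal_mul (by positivity),
          Real.div_rpow hy0.le (by norm_num), Real.rpow_neg hy0.le, Real.rpow_neg (by norm_num)]
        congr 1
        field_simp

lemma aux_avg {n : ℕ} (α ρ : ℝ) (σ : Measure (EuclideanSpace ℝ (Fin n)))
    [IsLocallyFiniteMeasure σ] (hα : 0 < α) (hαn : 2 * α < n) (hρ : 0 < ρ)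
    (x₀ : EuclideanSpace ℝ (Fin n)) (hx₀ : ‖x₀‖ = 2 * ρ)
    (L : ENNReal) (hL : ∀ x ∈ ball x₀ ρ, L ≤ riesz2 α σ x) :
    L ≤
      ENNReal.ofReal ((1 / (2 * α) + 1 / (n - 2 * α)) * ρ ^ (-((n:ℝ) - 2 * α))) * σ (ball 0 (6 * ρ))
      + ENNReal.ofReal (2 ^ ((n:ℝ) - 2 * α) / ((n:ℝ) - 2 * α)) *
        ∫⁻ y in {y : EuclideanSpace ℝ (Fin n) | 6 * ρ ≤ ‖y‖},
          (ENNReal.ofReal (‖y‖ ^ ((n : ℝ) - 2 * α)))⁻¹ ∂σ := by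
  set s := (n:ℝ) - 2 * α with hs
  have hs0 : 0 < s := by linarith
  set V := volume (ball x₀ ρ) with hV
  have hV0 : V ≠ 0 := (measure_ball_pos _ _ hρ).ne'
  have hVt : V ≠ ⊤ := measure_ball_lt_top.ne
  set R := ENNReal.ofReal ((1 / (2 * α) + 1 / s) * ρ ^ (-s)) * σ (ball 0 (6 * ρ))
      + ENNReal.ofReal (2 ^ s / s) *
        ∫⁻ y in {y : EuclideanSpace ℝ (Fin n) | 6 * ρ ≤ ‖y‖},
          (ENNReal.ofReal (‖y‖ ^ s))⁻¹ ∂σ with hR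
  have hup : ∫⁻ x in ball x₀ ρ, riesz2 α σ x ≤ V * R := by
    rw [aux_swap, ← hs]
    have hc : (ball (0 : EuclideanSpace ℝ (Fin n)) (6 * ρ))ᶜ = {y | 6 * ρ ≤ ‖y‖} := by
      ext y; simp
    rw [← lintegral_add_compl _ (measurableSet_ball (x := (0 : EuclideanSpace ℝ (Fin n)))
      (ε := 6 * ρ)), hc, hR, mul_add]
    gcongr
    · calc _ ≤ ∫⁻ y in ball (0 : EuclideanSpace ℝ (Fin n)) (6 * ρ),
            V * ENNReal.ofReal ((1 / (n - s) + 1 / s) * ρ ^ (-s)) ∂σ :=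
          lintegral_mono fun y => aux_G1 s ρ hs0 (by linarith) hρ x₀ y
        _ = _ := by
          rw [setLIntegral_const, mul_assoc, show (n:ℝ) - s = 2 * α by rw [hs]; ring]
    · rw [← mul_assoc, ← lintegral_const_mul _ (by fun_prop)]
      refine setLIntegral_mono' ?_ fun y hy => aux_G2 s ρ hs0 hρ x₀ y hx₀ hy
      rw [← hc]; exact measurableSet_ball.compl
  have hlow : V * L ≤ ∫⁻ x in ball x₀ ρ, riesz2 α σ x := by
    rw [mul_comm, hV, ← setLIntegral_const]
    exact setLIntegral_mono' measurableSet_ball hL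
  exact (ENNReal.mul_le_mul_iff_right hV0 hVt).1 (hlow.trans hup)

lemma aux_J {n : ℕ} (α q ρ : ℝ) (σ : Measure (EuclideanSpace ℝ (Fin n)))
    (hq1 : q < 1) (hαn : 2 * α < n) (hρ : 0 < ρ) (c : ENNReal)
    (x : EuclideanSpace ℝ (Fin n)) (hx1 : ρ < ‖x‖) (hx2 : ‖x‖ < 3 * ρ)
    (hyp : Kpot α q σ x ≤ c * (riesz2 α σ x) ^ (1 / (1 - q))) :
    ∫⁻ y in ball (0 : EuclideanSpace ℝ (Fin n)) ρ,
      (ENNReal.ofReal (‖y‖ ^ (((n : ℝ) - 2 * α) * q)))⁻¹ ∂σ ≤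
    c ^ (1 - q) * ENNReal.ofReal ((3 * ρ) ^ (((n : ℝ) - 2 * α) * (1 - q))) * riesz2 α σ x := by
  have hp : 0 < 1 - q := by linarith
  have hx0 : 0 < ‖x‖ := by linarith
  set s := (n : ℝ) - 2 * α with hs
  have hs0 : 0 < s := by linarith
  unfold Kpot at hyp
  rw [← hs] at hyp
  set J := ∫⁻ y in ball (0 : EuclideanSpace ℝ (Fin n)) ‖x‖,
      (ENNReal.ofReal (‖y‖ ^ (s * q)))⁻¹ ∂σ with hJ
  have h0 : ENNReal.ofReal (‖x‖ ^ s) ≠ 0 := by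
    simpa using Real.rpow_pos_of_pos hx0 s
  have h1 : J ^ (1 / (1 - q)) ≤ c * riesz2 α σ x ^ (1 / (1 - q)) * ENNReal.ofReal (‖x‖ ^ s) :=
    (ENNReal.div_le_iff h0 ENNReal.ofReal_ne_top).1 hyp
  have h2 := ENNReal.rpow_le_rpow h1 hp.le
  rw [ENNReal.mul_rpow_of_nonneg _ _ hp.le, ENNReal.mul_rpow_of_nonneg _ _ hp.le,
    ← ENNReal.rpow_mul, ← ENNReal.rpow_mul, one_div_mul_cancel hp.ne', ENNReal.rpow_one,
    ENNReal.rpow_one, ENNReal.ofReal_rpow_of_nonneg (by positivity) hp.le,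
    ← Real.rpow_mul hx0.le] at h2
  calc _ ≤ J := lintegral_mono_set (ball_subset_ball hx1.le)
    _ ≤ _ := h2
    _ = c ^ (1 - q) * ENNReal.ofReal (‖x‖ ^ (s * (1 - q))) * riesz2 α σ x := by ring
    _ ≤ _ := by gcongr

lemma aux_real (s q C C1 C2 c1 ρ j t m : ℝ) (hC : 0 ≤ C) (hC1 : 0 ≤ C1)
    (hc1 : 0 < c1) (hρ : 0 < ρ) (hj : 0 ≤ j)
    (hsmall : C * C1 * 3 ^ (s * (1 - q)) * c1 ^ (s * q) ≤ 1 / 2)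
    (h : j ≤ C * (3 * ρ) ^ (s * (1 - q)) * (C1 * ρ ^ (-s) * (m + (6 * ρ) ^ s * t) + C2 * t))
    (hm : m ≤ (c1 * ρ) ^ (s * q) * j) :
    j ≤ 2 * (C * 3 ^ (s * (1 - q)) * (C1 * 6 ^ s + C2)) * (c1 ^ (s * (1 - q)))⁻¹ *
      (c1 * ρ) ^ (s * (1 - q)) * t := by
  rw [Real.mul_rpow hc1.le hρ.le] at hm ⊢
  rw [Real.mul_rpow (by norm_num) hρ.le, Real.mul_rpow (by norm_num) hρ.le] at h
  have e : ρ ^ (-s) = (ρ ^ (s * (1 - q)))⁻¹ * (ρ ^ (s * q))⁻¹ := by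
    rw [← Real.rpow_neg hρ.le, ← Real.rpow_neg hρ.le, ← Real.rpow_add hρ]; ring_nf
  have e' : ρ ^ s = ρ ^ (s * (1 - q)) * ρ ^ (s * q) := by
    rw [← Real.rpow_add hρ]; ring_nf
  rw [e, e'] at h
  have hu : 0 < ρ ^ (s * (1 - q)) := by positivity
  have hv : 0 < ρ ^ (s * q) := by positivity
  have hw : 0 < c1 ^ (s * (1 - q)) := by positivity
  have hz : 0 < (3:ℝ) ^ (s * (1 - q)) := by positivity
  generalize ρ ^ (s * (1 - q)) = u at *
  generalize ρ ^ (s * q) = v at *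
  generalize c1 ^ (s * (1 - q)) = w at *
  generalize c1 ^ (s * q) = w' at *
  generalize (3:ℝ) ^ (s * (1 - q)) = z at *
  generalize (6:ℝ) ^ s = g at *
  have h3 : C * (z * u) * (C1 * (u⁻¹ * v⁻¹) * (m + g * (u * v) * t) + C2 * t)
      = C * C1 * z * v⁻¹ * m + C * z * (C1 * g + C2) * u * t := by
    field_simp
    ring
  have h4 : C * C1 * z * v⁻¹ * m ≤ C * C1 * z * v⁻¹ * (w' * v * j) := by gcongr
  have h5 : C * C1 * z * v⁻¹ * (w' * v * j) = (C * C1 * z * w') * j := by field_simp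
  have h6 : (C * C1 * z * w') * j ≤ 1 / 2 * j := by gcongr
  have h7 : 2 * (C * z * (C1 * g + C2)) * w⁻¹ * (w * u) * t
     = 2 * (C * z * (C1 * g + C2) * u * t) := by field_simp
  rw [h7]
  linarith

theorem stmt13 {n : ℕ} (α q : ℝ) (σ : Measure (EuclideanSpace ℝ (Fin n)))
    [IsLocallyFiniteMeasure σ]
    (hq : 0 < q) (hq1 : q < 1) (hα : 0 < α) (hαn : 2 * α < n)
    (hrad : ∀ e : EuclideanSpace ℝ (Fin n) ≃ₗᵢ[ℝ] EuclideanSpace ℝ (Fin n),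
      σ.map e = σ)
    (hyp : ∃ c : ENNReal, 0 < c ∧ c ≠ ⊤ ∧ ∃ δ : ℝ, 0 < δ ∧
      ∀ x : EuclideanSpace ℝ (Fin n), x ≠ 0 → ‖x‖ < δ →
        Kpot α q σ x ≤ c * (riesz2 α σ x) ^ (1 / (1 - q))) :
    limsup (ratioFn α q σ) (nhdsWithin (0:ℝ) (Ioi 0)) < ⊤ := by
  obtain ⟨c, hc0, hct, δ, hδ, hyp⟩ := hyp
  have hp : 0 < 1 - q := by linarith
  have hs0 : 0 < (n : ℝ) - 2 * α := by linarith
  have hn : 0 < n := by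
    have : (0:ℝ) < n := by linarith
    exact_mod_cast this
  haveI : Nonempty (Fin n) := ⟨⟨0, hn⟩⟩
  set s := (n : ℝ) - 2 * α with hs
  set C := (c ^ (1 - q)).toReal with hC
  have hcpt : c ^ (1 - q) ≠ ⊤ := ENNReal.rpow_ne_top_of_nonneg hp.le hct
  have hcp0 : 0 < c ^ (1 - q) := ENNReal.rpow_pos hc0 hct
  have hC0 : 0 < C := ENNReal.toReal_pos hcp0.ne' hcpt
  have hCe : c ^ (1 - q) = ENNReal.ofReal C := (ENNReal.ofReal_toReal hcpt).symm
  set C1 := 1 / (2 * α) + 1 / s with hC1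
  have hC10 : 0 < C1 := by positivity
  set C2 := 2 ^ s / s with hC2
  have hC20 : 0 < C2 := by positivity
  set C5 := C * C1 * 3 ^ (s * (1 - q)) with hC5
  have hC50 : 0 < C5 := by positivity
  obtain ⟨c1, hc1, hc11, hc1s⟩ : ∃ c1 : ℝ, 0 < c1 ∧ c1 ≤ 1 ∧ C5 * c1 ^ (s * q) ≤ 1 / 2 := by
    refine ⟨(1 / (2 * C5 + 2)) ^ (s * q)⁻¹, by positivity, ?_, ?_⟩
    · apply Real.rpow_le_one (by positivity) _ (by positivity)
      rw [div_le_one (by positivity)]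
      linarith
    · rw [Real.rpow_inv_rpow (by positivity) (by positivity), mul_one_div,
        div_le_div_iff₀ (by positivity) (by norm_num)]
      linarith
  set C4 := 2 * (C * 3 ^ (s * (1 - q)) * (C1 * 6 ^ s + C2)) * (c1 ^ (s * (1 - q)))⁻¹ with hC4
  have hC40 : 0 < C4 := by positivity
  refine lt_of_le_of_lt (limsup_le_of_le (by isBoundedDefault) (a := ENNReal.ofReal C4) ?_)
    ENNReal.ofReal_lt_top
  filter_upwards [Ioo_mem_nhdsGT (show (0:ℝ) < c1 * δ / 3 by positivity)] with r hr
  obtain ⟨hr0, hrδ⟩ := hr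
  obtain ⟨ρ, hρr⟩ : ∃ ρ, r = c1 * ρ := ⟨r / c1, by field_simp⟩
  have hρ : 0 < ρ := by
    rw [hρr] at hr0
    exact (mul_pos_iff_of_pos_left hc1).1 hr0
  have h3ρ : 3 * ρ < δ := by
    have : c1 * ρ < c1 * (δ / 3) := by rw [← hρr]; linarith
    have := lt_of_mul_lt_mul_left this hc1.le
    linarith
  have hrρ : r ≤ ρ := by rw [hρr]; nlinarith
  unfold ratioFn
  rw [← hs]
  set T : ℝ → ENNReal := fun r => ∫⁻ y in {y : EuclideanSpace ℝ (Fin n) | r ≤ ‖y‖},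
      (ENNReal.ofReal (‖y‖ ^ s))⁻¹ ∂σ with hT
  set J : ℝ → ENNReal := fun r => ∫⁻ y in ball (0 : EuclideanSpace ℝ (Fin n)) r,
      (ENNReal.ofReal (‖y‖ ^ (s * q)))⁻¹ ∂σ with hJ
  change J r / ENNReal.ofReal (r ^ (s * (1 - q))) / T r ≤ _
  by_cases hTt : T r = ⊤
  · rw [hTt]; simp
  have hJmono : J r ≤ J ρ := lintegral_mono_set (ball_subset_ball hrρ)
  have hTmono : T (6 * ρ) ≤ T r := lintegral_mono_set fun y hy => by
    have hy : 6 * ρ ≤ ‖y‖ := hy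
    change r ≤ ‖y‖
    linarith
  obtain ⟨x₀, hx₀⟩ : ∃ x₀ : EuclideanSpace ℝ (Fin n), ‖x₀‖ = 2 * ρ :=
    exists_norm_eq _ (by positivity)
  have hmain : J ρ ≤ ENNReal.ofReal (C * (3 * ρ) ^ (s * (1 - q))) *
      (ENNReal.ofReal (C1 * ρ ^ (-s)) * σ (ball 0 (6 * ρ)) + ENNReal.ofReal C2 * T (6 * ρ)) := by
    have hD0 : ENNReal.ofReal (C * (3 * ρ) ^ (s * (1 - q))) ≠ 0 := by
      have : 0 < C * (3 * ρ) ^ (s * (1 - q)) := by positivity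
      simpa using this
    rw [mul_comm, ← ENNReal.div_le_iff hD0 ENNReal.ofReal_ne_top]
    refine aux_avg α ρ σ hα hαn hρ x₀ hx₀ _ fun x hx => ?_
    have hx' : ‖x - x₀‖ < ρ := by simpa [dist_eq_norm] using hx
    have ha := norm_sub_norm_le x x₀
    have hb := norm_sub_norm_le x₀ x
    rw [norm_sub_rev] at hb
    have hx1 : ρ < ‖x‖ := by linarith
    have hx2 : ‖x‖ < 3 * ρ := by linarith
    rw [ENNReal.div_le_iff hD0 ENNReal.ofReal_ne_top, ENNReal.ofReal_mul hC0.le, ← hCe, mul_comm]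
    exact aux_J α q ρ σ hq1 hαn hρ c x hx1 hx2
      (hyp x (norm_pos_iff.1 (by linarith)) (by linarith))
  have hT6 : T (6 * ρ) ≠ ⊤ := ne_top_of_le_ne_top hTt hTmono
  have hm6 : σ (ball 0 (6 * ρ)) ≠ ⊤ := measure_ball_lt_top.ne
  have hm : σ (ball 0 r) ≠ ⊤ := measure_ball_lt_top.ne
  have hJt : J ρ ≠ ⊤ := by
    refine ne_top_of_le_ne_top ?_ hmain
    exact ENNReal.mul_ne_top ENNReal.ofReal_ne_top (ENNReal.add_ne_top.2
      ⟨ENNReal.mul_ne_top ENNReal.ofReal_ne_top hm6, ENNReal.mul_ne_top ENNReal.ofReal_ne_top hT6⟩)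
  have hms : MeasurableSet {y : EuclideanSpace ℝ (Fin n) | r ≤ ‖y‖} :=
    measurableSet_le measurable_const measurable_norm
  -- the intermediate annulus
  have hball : σ (ball 0 (6 * ρ)) ≤ σ (ball 0 r) + ENNReal.ofReal ((6 * ρ) ^ s) * T r := by
    have hsub : ball (0 : EuclideanSpace ℝ (Fin n)) (6 * ρ) ⊆
        ball 0 r ∪ ({y | r ≤ ‖y‖} ∩ ball 0 (6 * ρ)) := by
      intro y hy
      by_cases h : r ≤ ‖y‖
      · exact Or.inr ⟨h, hy⟩
      · left; simpa using h
    refine (measure_mono hsub).trans ((measure_union_le _ _).trans ?_)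
    gcongr
    have hP : 0 < (6 * ρ) ^ s := by positivity
    rw [← ENNReal.inv_mul_le_iff (by simpa using hP) ENNReal.ofReal_ne_top, ← setLIntegral_const]
    calc _ ≤ ∫⁻ y in {y : EuclideanSpace ℝ (Fin n) | r ≤ ‖y‖} ∩ ball 0 (6 * ρ),
          (ENNReal.ofReal (‖y‖ ^ s))⁻¹ ∂σ := by
          refine setLIntegral_mono' (hms.inter measurableSet_ball) fun y hy => ?_
          have : ‖y‖ < 6 * ρ := by simpa using hy.2
          gcongr
      _ ≤ _ := lintegral_mono_set inter_subset_left
  have hinner : σ (ball 0 r) ≤ ENNReal.ofReal (r ^ (s * q)) * J ρ := by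
    refine le_trans ?_ (mul_le_mul_right hJmono _)
    have hP : 0 < r ^ (s * q) := by positivity
    rw [← ENNReal.inv_mul_le_iff (by simpa using hP) ENNReal.ofReal_ne_top, ← setLIntegral_const]
    refine setLIntegral_mono' measurableSet_ball fun y hy => ?_
    have : ‖y‖ < r := by simpa using hy
    gcongr
  have hfin : J ρ ≤ ENNReal.ofReal (C4 * r ^ (s * (1 - q))) * T r := by
    have hmain2 : J ρ ≤ ENNReal.ofReal (C * (3 * ρ) ^ (s * (1 - q))) *
      (ENNReal.ofReal (C1 * ρ ^ (-s)) * (σ (ball 0 r) + ENNReal.ofReal ((6 * ρ) ^ s) * T r)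
        + ENNReal.ofReal C2 * T r) := hmain.trans (by gcongr)
    rw [← ENNReal.ofReal_toReal hJt, ← ENNReal.ofReal_toReal hm] at hinner
    rw [← ENNReal.ofReal_toReal hJt, ← ENNReal.ofReal_toReal hm,
      ← ENNReal.ofReal_toReal hTt] at hmain2
    rw [← ENNReal.ofReal_toReal hJt, ← ENNReal.ofReal_toReal hTt]
    have hj0 : 0 ≤ (J ρ).toReal := ENNReal.toReal_nonneg
    have ht0 : 0 ≤ (T r).toReal := ENNReal.toReal_nonneg
    have hm0 : 0 ≤ (σ (ball 0 r)).toReal := ENNReal.toReal_nonneg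
    generalize (J ρ).toReal = j at *
    generalize (T r).toReal = t at *
    generalize (σ (ball 0 r)).toReal = m at *
    rw [← ENNReal.ofReal_mul (by positivity), ENNReal.ofReal_le_ofReal_iff (by positivity)]
      at hinner
    rw [← ENNReal.ofReal_mul (by positivity), ← ENNReal.ofReal_add (by positivity) (by positivity),
      ← ENNReal.ofReal_mul (by positivity), ← ENNReal.ofReal_mul (by positivity),
      ← ENNReal.ofReal_add (by positivity) (by positivity), ← ENNReal.ofReal_mul (by positivity),
      ENNReal.ofReal_le_ofReal_iff (by positivity)] at hmain2
    rw [← ENNReal.ofReal_mul (by positivity)]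
    apply ENNReal.ofReal_le_ofReal
    rw [hρr] at hinner ⊢
    exact aux_real s q C C1 C2 c1 ρ j t m hC0.le hC10.le hc1 hρ hj0 hc1s hmain2 hinner
  apply ENNReal.div_le_of_le_mul
  apply ENNReal.div_le_of_le_mul
  refine (hJmono.trans hfin).trans (le_of_eq ?_)
  rw [ENNReal.ofReal_mul hC40.le]
  ring
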